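/- On ℝ^n with n ≥ 2, let 𝒜 := σ(s) be the σ-algebra of preimages under the sum map s(x₁,…,xₙ) = x₁ + ⋯ + xₙ of Borel subsets of ℝ. Then for every proper subset M ⊊ {1,…,n}, the reduced σ-algebra { A ⊆ ℝ^M : A × ℝ^{{1,…,n}∖M} ∈ 𝒜 } is the trivial σ-algebra {∅, ℝ^M}, where A × ℝ^{{1,…,n}∖M} denotes the preimage of A under the canonical projection ℝ^n → ℝ^M. -/

import Mathlib

/-- The canonical projection `ℝ^n → ℝ^M` discarding the coordinates outside `M`. -/
def projFull {n : ℕ} (M : Finset (Fin n))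
    (x : Fin n → ℝ) (i : {j : Fin n // j ∈ M}) : ℝ :=
  x i.1

/-- On `ℝ^n` with `n ≥ 2`, let `𝒜 := σ(s)` be the σ-algebra of preimages of Borel sets
under the sum map `s(x₁,…,xₙ) = x₁ + ⋯ + xₙ`. Then for every proper subset
`M ⊊ {1,…,n}`, the reduced σ-algebra `{ A ⊆ ℝ^M : (π^N_M)⁻¹(A) ∈ 𝒜 }` (the pushforward
`map` of `𝒜` under the canonical projection) is the trivial σ-algebra `{∅, ℝ^M} = ⊥`. -/
theorem redFam_of_sum_trivial {n : ℕ} (hn : 2 ≤ n)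
    (M : Finset (Fin n)) (hM : M ≠ Finset.univ) :
    MeasurableSpace.map (projFull M)
        (MeasurableSpace.comap (fun x : Fin n → ℝ => ∑ i, x i) Real.measurableSpace)
      = ⊥ := by
  obtain ⟨k, hk⟩ : ∃ k, k ∉ M := by
    by_contra! h
    exact hM (Finset.eq_univ_iff_forall.2 h)
  have key : ∀ (y : {j : Fin n // j ∈ M} → ℝ) (t : ℝ),
      ∃ x : Fin n → ℝ, projFull M x = y ∧ ∑ i, x i = t := by
    intro y t
    let z : Fin n → ℝ := fun i => if h : i ∈ M then y ⟨i, h⟩ else 0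
    refine ⟨Function.update z k (t - ∑ i ∈ Finset.univ \ {k}, z i), ?_, ?_⟩
    · funext i
      have hne : i.1 ≠ k := fun h => hk (h ▸ i.2)
      simp [projFull, Function.update_of_ne hne, z]
    · rw [Finset.sum_update_of_mem (Finset.mem_univ k)]
      ring
  ext A
  rw [MeasurableSpace.measurableSet_bot_iff, MeasurableSpace.map_def]
  constructor
  · rintro ⟨B, -, hB⟩
    have h : ∀ y t, t ∈ B ↔ y ∈ A := by
      intro y t
      obtain ⟨x, hx, hs⟩ := key y t
      have := Set.ext_iff.1 hB x
      simpa only [Set.mem_preimage, hx, hs] using this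
    by_cases h0 : (0 : ℝ) ∈ B
    · right
      exact Set.eq_univ_of_forall fun y => (h y 0).1 h0
    · left
      exact Set.eq_empty_of_forall_notMem fun y hy => h0 ((h y 0).2 hy)
  · rintro (rfl | rfl)
    · exact @MeasurableSet.empty _ (_)
    · exact @MeasurableSet.univ _ (_)
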